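/- For every r ≥ 1 there exists q = q(r) such that for every n > r with gcd(n, r) = 1, the n prisoners have a symmetric winning strategy for r rooms with q states. -/

import Mathlib

namespace PrisonersGame

/-- A deterministic strategy for a prisoner: given the list of states observed
on previous visits and the state observed on the current visit, return the
state to leave the room in and whether to declare. -/
def Strategy : Type := List ℕ → ℕ → ℕ × Bool

/-- A strategy is valid for `q` states if, whenever all states observed so far
are among `0, …, q-1`, the state it leaves the room in is among `0, …, q-1`. -/
def Strategy.ValidFor (q : ℕ) (σ : Strategy) : Prop :=
  ∀ (h : List ℕ) (s : ℕ), (∀ x ∈ h, x < q) → s < q → (σ h s).1 < q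

/-- A schedule: at each time step, one prisoner is led into one room. -/
def Schedule (n r : ℕ) : Type := ℕ → Fin n × Fin r

/-- A schedule is fair if every prisoner is led into every room infinitely often. -/
def Schedule.Fair {n r : ℕ} (sched : Schedule n r) : Prop :=
  ∀ (p : Fin n) (room : Fin r), {t : ℕ | sched t = (p, room)}.Infinite

/-- The state of play just before step `t`: the current states of the rooms, and
the list of states observed so far by each prisoner. All rooms start in state `0`. -/
def run {n r : ℕ} (strat : Fin n → Strategy) (sched : Schedule n r) :
    ℕ → (Fin r → ℕ) × (Fin n → List ℕ)
  | 0 => (fun _ => 0, fun _ => [])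
  | t + 1 =>
      let prev := run strat sched t
      let p := (sched t).1
      let room := (sched t).2
      let obs := prev.1 room
      (Function.update prev.1 room (strat p (prev.2 p) obs).1,
        Function.update prev.2 p (prev.2 p ++ [obs]))

/-- The prisoner visiting at step `t` declares during that visit. -/
def declaresAt {n r : ℕ} (strat : Fin n → Strategy) (sched : Schedule n r)
    (t : ℕ) : Prop :=
  (strat (sched t).1 ((run strat sched t).2 (sched t).1)
      ((run strat sched t).1 (sched t).2)).2 = true

/-- Every prisoner has visited every room by step `t` (inclusive). -/
def allVisitedBy {n r : ℕ} (sched : Schedule n r) (t : ℕ) : Prop :=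
  ∀ (p : Fin n) (room : Fin r), ∃ s ≤ t, sched s = (p, room)

/-- A strategy profile is winning if, for every fair schedule, some prisoner
eventually declares, and no prisoner ever declares at a time before every
prisoner has visited every room. -/
def Winning {n r : ℕ} (strat : Fin n → Strategy) : Prop :=
  ∀ sched : Schedule n r, sched.Fair →
    (∃ t, declaresAt strat sched t) ∧
    ∀ t, declaresAt strat sched t → allVisitedBy sched t

/-- `n` prisoners have a winning strategy for `r` rooms with `q` states. -/
def HasWinningStrategy (n r q : ℕ) : Prop :=
  ∃ strat : Fin n → Strategy, (∀ p, (strat p).ValidFor q) ∧ Winning (n := n) (r := r) strat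

/-- `n` prisoners have a symmetric winning strategy (all prisoners use the
same strategy) for `r` rooms with `q` states. -/
def HasSymmetricWinningStrategy (n r q : ℕ) : Prop :=
  ∃ σ : Strategy, σ.ValidFor q ∧ Winning (n := n) (r := r) (fun _ => σ)

end PrisonersGame

/-!
Each room initially holds one unit of a first kind of charge, and each prisoner owns one unit of a
second kind, counted modulo `r`. The prisoners gather all charge into one room: a charge that is
found is picked up, leaving a note that announces it, and is dropped again onto the next charge that
is met. Different carriers do not wait for each other forever, because a carrier also drops its
charge when it reads a note announcing a charge of higher rank. Hence in a deadlock all charge is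
carried in `k` equal portions, so that `k` divides both `r` and `n`, and coprimality leaves `k = 1`:
a single portion contains all units of the first kind. But the prisoner who finds such a portion
does not pick it up: it becomes the leader.

The leader erases the rooms one after the other and then invites the other prisoners, one at a time,
to visit all rooms. A bit on every room, flipped once by each invited prisoner, tells that prisoner
where it has already been, so that the leader can count the finished tours.
-/

namespace PrisonersGame

lemma sum_update_add {ι α Γ : Type*} [Fintype ι] [DecidableEq ι] [AddCommMonoid Γ] (f : α → Γ)
    (x : ι → α) (i : ι) (a : α) :
    ∑ k, f (Function.update x i a k) + f (x i) = ∑ k, f (x k) + f a := by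
  rw [← Finset.sum_erase_add _ _ (Finset.mem_univ i),
    ← Finset.sum_erase_add _ (fun k => f (x k)) (Finset.mem_univ i), Function.update_self,
    Finset.sum_congr rfl fun k hk =>
      congrArg f (Function.update_of_ne (Finset.ne_of_mem_erase hk) a x)]
  abel

lemma toLex_add_toLex_lt_iff {α β : Type*} [Add α] [LT α] [Add β] [LT β] {x z x' z' : α}
    {y w y' w' : β} : toLex (x, y) + toLex (z, w) < toLex (x', y') + toLex (z', w') ↔
      x + z < x' + z' ∨ x + z = x' + z' ∧ y + w < y' + w' :=
  Prod.Lex.toLex_lt_toLex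

/-- The condition of all `n` prisoners and all `r` rooms between two visits, when the memory of a
prisoner is an element of `P` and the state of a room is an element of `S`. -/
@[ext]
structure Config (P S : Type*) (n r : ℕ) where
  prisoner : Fin n → P
  room : Fin r → S

namespace Config

variable {P S : Type*} {n r : ℕ} (δ : P → S → P × S) (C : Config P S n r)

/-- The effect of a visit when prisoners and rooms are updated by the transition function `δ`. -/
def step (v : Fin n × Fin r) : Config P S n r where
  prisoner := Function.update C.prisoner v.1 (δ (C.prisoner v.1) (C.room v.2)).1
  room := Function.update C.room v.2 (δ (C.prisoner v.1) (C.room v.2)).2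

/-- A configuration is stable if no visit changes it. -/
def Stable : Prop := ∀ v, C.step δ v = C

@[simp]
lemma step_prisoner_self (p : Fin n) (i : Fin r) :
    (C.step δ (p, i)).prisoner p = (δ (C.prisoner p) (C.room i)).1 :=
  Function.update_self ..

@[simp]
lemma step_room_self (p : Fin n) (i : Fin r) :
    (C.step δ (p, i)).room i = (δ (C.prisoner p) (C.room i)).2 :=
  Function.update_self ..

variable {δ C}

lemma step_prisoner_of_ne {p p' : Fin n} (h : p' ≠ p) (i : Fin r) :
    (C.step δ (p, i)).prisoner p' = C.prisoner p' :=
  Function.update_of_ne h ..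

lemma step_room_of_ne {i i' : Fin r} (h : i' ≠ i) (p : Fin n) :
    (C.step δ (p, i)).room i' = C.room i' :=
  Function.update_of_ne h ..

lemma step_eq_of_eq {p : Fin n} {i : Fin r} {x : P} {y : S}
    (h : δ (C.prisoner p) (C.room i) = (x, y)) :
    C.step δ (p, i) = ⟨Function.update C.prisoner p x, Function.update C.room i y⟩ := by
  simp only [step, h]

lemma step_eq_self_iff {p : Fin n} {i : Fin r} :
    C.step δ (p, i) = C ↔ δ (C.prisoner p) (C.room i) = (C.prisoner p, C.room i) := by
  simp [Config.ext_iff, step, Function.update_eq_self_iff, Prod.ext_iff]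

/-- The configuration obtained by embedding memories and room states into larger types. -/
def map {P' S' : Type*} (f : P → P') (g : S → S') (C : Config P S n r) : Config P' S' n r :=
  ⟨f ∘ C.prisoner, g ∘ C.room⟩

lemma step_map {P' S' : Type*} {f : P → P'} {g : S → S'} {δ' : P' → S' → P' × S'}
    {p : Fin n} {i : Fin r}
    (h : δ' (f (C.prisoner p)) (g (C.room i)) =
      Prod.map f g (δ (C.prisoner p) (C.room i))) :
    (C.map f g).step δ' (p, i) = (C.step δ (p, i)).map f g := by
  simp [map, step, h, Function.comp_update]

section Total

variable {Γ : Type*} [AddCommMonoid Γ] (f : P → Γ) (g : S → Γ)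

/-- The sum of an additive quantity over all prisoners and all rooms. -/
def total (C : Config P S n r) : Γ := ∑ p, f (C.prisoner p) + ∑ i, g (C.room i)

lemma total_step_add (C : Config P S n r) (p : Fin n) (i : Fin r) :
    (C.step δ (p, i)).total f g + (f (C.prisoner p) + g (C.room i)) =
      C.total f g +
        (f (δ (C.prisoner p) (C.room i)).1 + g (δ (C.prisoner p) (C.room i)).2) := by
  simp only [total, step]
  rw [add_add_add_comm, sum_update_add, sum_update_add, add_add_add_comm]

variable {f g}

lemma room_le_total [PartialOrder Γ] [CanonicallyOrderedAdd Γ] (i : Fin r) :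
    g (C.room i) ≤ C.total f g :=
  (Finset.single_le_sum_of_canonicallyOrdered (f := fun i => g (C.room i))
    (Finset.mem_univ i)).trans le_add_self

variable {p : Fin n} {i : Fin r}

lemma total_step_eq [IsRightCancelAdd Γ]
    (h : f (δ (C.prisoner p) (C.room i)).1 + g (δ (C.prisoner p) (C.room i)).2 =
      f (C.prisoner p) + g (C.room i)) :
    (C.step δ (p, i)).total f g = C.total f g :=
  add_right_cancel ((total_step_add f g C p i).trans (by rw [h]))

lemma total_step_lt [PartialOrder Γ] [IsOrderedCancelAddMonoid Γ]
    (h : f (δ (C.prisoner p) (C.room i)).1 + g (δ (C.prisoner p) (C.room i)).2 <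
      f (C.prisoner p) + g (C.room i)) :
    (C.step δ (p, i)).total f g < C.total f g :=
  lt_of_add_lt_add_right ((total_step_add f g C p i).trans_lt (by gcongr))

lemma total_step_le [PartialOrder Γ] [IsOrderedCancelAddMonoid Γ]
    (h : f (δ (C.prisoner p) (C.room i)).1 + g (δ (C.prisoner p) (C.room i)).2 ≤
      f (C.prisoner p) + g (C.room i)) :
    (C.step δ (p, i)).total f g ≤ C.total f g :=
  le_of_add_le_add_right ((total_step_add f g C p i).trans_le (by gcongr))

end Total

end Config

/-! ### Symmetric strategies as automata -/

/-- A symmetric strategy described by an automaton: prisoners with memory in `P`, initially `start`,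
act on rooms with states in `S`, initially `blank`. -/
structure Protocol (P S : Type*) where
  start : P
  blank : S
  next : P → S → P × S
  declares : P → S → Bool

namespace Protocol

variable {P S : Type*} {n r : ℕ} (M : Protocol P S)

/-- The configuration just before time `t` when all prisoners follow `M`. -/
def trace (sched : Schedule n r) : ℕ → Config P S n r
  | 0 => ⟨fun _ => M.start, fun _ => M.blank⟩
  | t + 1 => (trace sched t).step M.next (sched t)

/-- The declaration condition of `M` at time `t`. -/
def DeclaresAt (sched : Schedule n r) (t : ℕ) : Prop :=
  M.declares ((M.trace sched t).prisoner (sched t).1) ((M.trace sched t).room (sched t).2)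

theorem exists_stable {Γ : Type*} [AddCommMonoid Γ] [PartialOrder Γ] [IsOrderedCancelAddMonoid Γ]
    [WellFoundedLT Γ] (φ : P → Γ) (ψ : S → Γ)
    (hdrop : ∀ p s, M.next p s = (p, s) ∨ φ (M.next p s).1 + ψ (M.next p s).2 < φ p + ψ s)
    {sched : Schedule n r} (hfair : sched.Fair) :
    ∃ T, (∀ t ≥ T, M.trace sched t = M.trace sched T) ∧ (M.trace sched T).Stable M.next := by
  have step_or (C : Config P S n r) (v) :
      C.step M.next v = C ∨ (C.step M.next v).total φ ψ < C.total φ ψ :=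
    (hdrop _ _).imp Config.step_eq_self_iff.2 Config.total_step_lt
  have anti : Antitone fun t => (M.trace sched t).total φ ψ :=
    antitone_nat_of_succ_le fun t =>
      (step_or (M.trace sched t) (sched t)).elim (fun h => (congrArg _ h).le) le_of_lt
  obtain ⟨T, hT⟩ := WellFoundedLT.antitone_chain_condition anti
  have const : ∀ t ≥ T, M.trace sched t = M.trace sched T := fun t ht => by
    induction t, ht using Nat.le_induction with
    | base => rfl
    | succ t ht ih =>
      refine ((step_or (M.trace sched t) (sched t)).resolve_right fun hlt => ?_).trans ih
      exact hlt.ne ((hT (t + 1) (by omega)).symm.trans (hT t ht))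
  refine ⟨T, const, fun v => ?_⟩
  obtain ⟨t, ht, hTt⟩ := (hfair v.1 v.2).exists_gt T
  obtain rfl : sched t = v := ht
  rw [← const t hTt.le]
  exact (const (t + 1) (by omega)).trans (const t hTt.le).symm

/-- The strategy that recomputes the memory of a prisoner from the encoded states it has seen. -/
def toStrategy (code : S → ℕ) (decode : ℕ → S) : Strategy := fun h x =>
  let p := h.foldl (fun p y => (M.next p (decode y)).1) M.start
  (code (M.next p (decode x)).2, M.declares p (decode x))

variable {M} {code : S → ℕ} {decode : ℕ → S} {F : Set S} {sched : Schedule n r}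

lemma run_toStrategy (hblank : code M.blank = 0) (hdecode : Set.LeftInvOn decode code F)
    (hF : ∀ t i, (M.trace sched t).room i ∈ F) (t : ℕ) :
    (∀ i, (run (fun _ => M.toStrategy code decode) sched t).1 i =
      code ((M.trace sched t).room i)) ∧
    ∀ p, ((run (fun _ => M.toStrategy code decode) sched t).2 p).foldl
      (fun p y => (M.next p (decode y)).1) M.start = (M.trace sched t).prisoner p := by
  induction t with
  | zero => exact ⟨fun _ => hblank.symm, fun _ => rfl⟩
  | succ t ih =>
    obtain ⟨hroom, hmem⟩ := ih
    have hobs := hdecode (hF t (sched t).2)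
    refine ⟨fun i => ?_, fun p => ?_⟩
    · by_cases hi : i = (sched t).2
      · subst hi
        simp only [run, trace, Config.step, Function.update_self, toStrategy, hroom, hmem, hobs]
      · simp only [run, trace, Config.step, Function.update_of_ne hi, hroom]
    · by_cases hp : p = (sched t).1
      · subst hp
        simp only [run, trace, Config.step, Function.update_self, List.foldl_append,
          List.foldl_cons, List.foldl_nil, hroom, hmem, hobs]
      · simp only [run, trace, Config.step, Function.update_of_ne hp, hmem]

lemma declaresAt_toStrategy_iff (hblank : code M.blank = 0)
    (hdecode : Set.LeftInvOn decode code F) (hF : ∀ t i, (M.trace sched t).room i ∈ F) (t : ℕ) :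
    declaresAt (fun _ => M.toStrategy code decode) sched t ↔ M.DeclaresAt sched t := by
  obtain ⟨hroom, hmem⟩ := run_toStrategy hblank hdecode hF t
  simp only [declaresAt, toStrategy, DeclaresAt, hroom, hmem, hdecode (hF t _)]

theorem hasSymmetricWinningStrategy {q : ℕ} (hblank : code M.blank = 0) (hlt : ∀ s, code s < q)
    (hcode : F.InjOn code)
    (hF : ∀ (sched : Schedule n r) t i, (M.trace sched t).room i ∈ F)
    (hlive : ∀ sched : Schedule n r, sched.Fair → ∃ t, M.DeclaresAt sched t)
    (hsafe : ∀ (sched : Schedule n r) t, M.DeclaresAt sched t → allVisitedBy sched t) :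
    HasSymmetricWinningStrategy n r q := by
  have : Nonempty S := ⟨M.blank⟩
  refine ⟨M.toStrategy code (Function.invFunOn code F), fun _ _ _ _ => hlt _, fun sched hfair => ?_⟩
  simp only [declaresAt_toStrategy_iff hblank hcode.leftInvOn_invFunOn (hF sched)]
  exact ⟨hlive sched hfair, hsafe sched⟩

end Protocol

lemma exists_code {S : Type*} {F : Set S} (hF : F.Finite) (s₀ : S) :
    ∃ (q : ℕ) (code : S → ℕ), code s₀ = 0 ∧ (∀ s, code s < q) ∧ F.InjOn code := by
  classical
  let l := s₀ :: hF.toFinset.toList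
  refine ⟨l.length + 1, fun s => l.idxOf s, List.idxOf_cons_self,
    fun s => Nat.lt_succ_of_le List.idxOf_le_length, fun s hs t _ hst => ?_⟩
  exact (List.idxOf_inj (by simp [l, hs])).1 hst

/-! ### Gathering the charge -/

/-- The two quantities that the prisoners gather into one room: the number of rooms and the number
of prisoners, the latter modulo `r` in order to have boundedly many values. -/
abbrev Charge (r : ℕ) : Type := ℕ × ZMod r

/-- The position of a charge in the lexicographic order. -/
def rank {r : ℕ} (z : Charge r) : ℕ := z.1 * r + z.2.val

lemma rank_injective {r : ℕ} [NeZero r] : Function.Injective (rank : Charge r → ℕ) := by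
  intro z w h
  have hdiv (u : Charge r) : rank u / r = u.1 := by
    rw [rank, Nat.mul_comm, Nat.mul_add_div (NeZero.pos r), Nat.div_eq_of_lt (ZMod.val_lt u.2),
      add_zero]
  have hfst : z.1 = w.1 := by rw [← hdiv z, ← hdiv w, h]
  refine Prod.ext hfst (ZMod.val_injective r ?_)
  rwa [rank, rank, hfst, Nat.add_left_cancel_iff] at h

/-- The memory of a prisoner while charge is being gathered. -/
inductive Collector (r : ℕ) : Type
  /-- has not made any visit, and owns one unit of the second kind of charge -/
  | fresh
  /-- carries no charge and has no note to remove -/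
  | idle
  /-- carries the charge `z`, announced by a note in the room it was found in -/
  | carrying (z : Charge r)
  /-- has dropped the charge `z` and must remove the note that announces it -/
  | cleaning (z : Charge r)
deriving DecidableEq

/-- The state of a room while charge is being gathered: its charge, and a note announcing a charge
that was taken away from it. -/
structure Pile (r : ℕ) : Type where
  charge : Charge r
  note : Option (Charge r)

/-- The gathering rule. A carrier drops its charge onto another one, or anywhere if a note tells it
that a charge of higher rank is being carried. -/
def gather {r : ℕ} : Collector r → Pile r → Collector r × Pile r
  | .fresh, s => (.idle, ⟨s.charge + (0, 1), s.note⟩)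
  | .idle, ⟨c, none⟩ => if c = 0 then (.idle, ⟨c, none⟩) else (.carrying c, ⟨0, some c⟩)
  | .idle, s => (.idle, s)
  | .carrying z, s =>
      if s.charge ≠ 0 ∨ ∃ w ∈ s.note, rank z < rank w then (.cleaning z, ⟨s.charge + z, s.note⟩)
      else (.carrying z, s)
  | .cleaning z, s => if s.note = some z then (.idle, ⟨s.charge, none⟩) else (.cleaning z, s)

/-- An idle prisoner that finds all units of the first kind of charge becomes the leader. -/
def Elected {r : ℕ} (a : Collector r) (s : Pile r) : Prop :=
  a = .idle ∧ s.note = none ∧ s.charge.1 = r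

instance {r : ℕ} (a : Collector r) (s : Pile r) : Decidable (Elected a s) :=
  inferInstanceAs (Decidable (_ ∧ _))

namespace Collector

variable {r : ℕ}

/-- The charge owned by a prisoner. -/
def charge : Collector r → Charge r
  | fresh => (0, 1)
  | carrying z => z
  | _ => 0

/-- The notes that a prisoner has left and not removed. -/
def notes : Collector r → Multiset (Charge r)
  | carrying z | cleaning z => {z}
  | _ => 0

/-- The contribution of a prisoner to the potential of the gathering rule, whose components count
the separate charges and the work left to move them around. That work is `3 * ρ + 3` for a charge of
rank `ρ` in a room, and one less at each of the next two stages. The factor `3` pays for removing a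
note of rank `ρ`, after which a charge of lower rank in that room may be picked up again. -/
def potential : Collector r → ℕ ×ₗ ℕ
  | fresh => toLex (2, 0)
  | idle => toLex (0, 0)
  | carrying z => toLex (1, 3 * rank z + 2)
  | cleaning z => toLex (0, 3 * rank z + 1)

end Collector

namespace Pile

variable {r : ℕ}

/-- The notes in a room. -/
def notes (s : Pile r) : Multiset (Charge r) := s.note.elim 0 fun z => {z}

/-- The contribution of a room to the potential of the gathering rule. -/
def potential (s : Pile r) : ℕ ×ₗ ℕ :=
  toLex (if s.charge = 0 then 0 else 1,
    if s.charge = 0 ∨ ∃ w ∈ s.note, rank s.charge < rank w then 0 else 3 * rank s.charge + 3)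

end Pile

section Gather

variable {r : ℕ} (a : Collector r) (s : Pile r)

lemma charge_gather :
    (gather a s).1.charge + (gather a s).2.charge = a.charge + s.charge := by
  obtain ⟨c, _ | w⟩ := s <;> cases a <;> simp only [gather] <;> try split_ifs
  all_goals simp [Collector.charge, add_comm]

lemma notes_gather :
    (gather a s).1.notes + s.notes = a.notes + (gather a s).2.notes := by
  obtain ⟨c, _ | w⟩ := s <;> cases a <;> simp only [gather] <;> try split_ifs with h
  all_goals simp_all [Collector.notes, Pile.notes]

variable {s} in
lemma potential_drop_lt {z : Charge r}
    (h : s.charge ≠ 0 ∨ ∃ w ∈ s.note, rank z < rank w) :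
    (Collector.cleaning z).potential + (Pile.mk (s.charge + z) s.note).potential <
      (Collector.carrying z).potential + s.potential := by
  simp only [Collector.potential, Pile.potential, toLex_add_toLex_lt_iff]
  by_cases hc : s.charge = 0
  · have hw : ∃ w ∈ s.note, rank z < rank w := h.resolve_left (· hc)
    by_cases hz : z = 0
    · simp [hc, hz]
    · right
      simp only [hc, zero_add, if_neg hz, if_pos (Or.inr hw), reduceIte, true_or]
      exact ⟨trivial, Nat.lt_succ_self _⟩
  · by_cases hz : s.charge + z = 0 <;> simp [hc, hz]

lemma potential_clean_lt (c z : Charge r) :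
    (Collector.idle (r := r)).potential + (Pile.mk c none).potential <
      (Collector.cleaning z).potential + (Pile.mk c (some z)).potential := by
  simp only [Collector.potential, Pile.potential, toLex_add_toLex_lt_iff]
  by_cases hc : c = 0
  · simp [hc]
  · by_cases hz : rank c < rank z <;> simp [hc, hz]
    omega

lemma gather_eq_or_potential_lt :
    gather a s = (a, s) ∨
      (gather a s).1.potential + (gather a s).2.potential < a.potential + s.potential := by
  obtain ⟨c, note⟩ := s
  cases a with
  | fresh =>
    right
    by_cases hc : c + (0, 1) = 0 <;>
      simp [gather, hc, Collector.potential, Pile.potential, toLex_add_toLex_lt_iff]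
    omega
  | idle =>
    cases note with
    | some w => exact .inl rfl
    | none =>
      by_cases hc : c = 0 <;>
        simp [gather, hc, Collector.potential, Pile.potential, toLex_add_toLex_lt_iff]
  | carrying z =>
    simp only [gather]
    split_ifs with h
    · exact .inr (potential_drop_lt (s := ⟨c, note⟩) h)
    · exact .inl rfl
  | cleaning z =>
    simp only [gather]
    split_ifs with h
    · obtain rfl : note = some z := h
      exact .inr (potential_clean_lt c z)
    · exact .inl rfl

variable {a s} {z : Charge r}

lemma mem_notes_or_eq_of_mem_notes_gather (h : z ∈ (gather a s).2.notes) :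
    z ∈ s.notes ∨ z = s.charge := by
  obtain ⟨c, _ | w⟩ := s <;> cases a <;> simp only [gather] at h <;> try split_ifs at h
  all_goals simp_all [Pile.notes]

lemma eq_of_gather_eq_carrying (h : (gather a s).1 = .carrying z) :
    a = .carrying z ∨ a = .idle ∧ s = ⟨z, none⟩ := by
  obtain ⟨c, _ | w⟩ := s <;> cases a <;> simp only [gather] at h <;> try split_ifs at h
  all_goals simp_all

end Gather

/-! ### Absence of deadlock while gathering -/

lemma fst_eq_of_nsmul_eq {n r : ℕ} [NeZero r] (hgcd : Nat.gcd n r = 1) {z : Charge r} {k : ℕ}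
    (hk : k • z = (r, (n : ZMod r))) : z.1 = r := by
  have hfst : k * z.1 = r := congrArg Prod.fst hk
  have hsnd : k * z.2 = (n : ZMod r) := (nsmul_eq_mul k z.2).symm.trans (congrArg Prod.snd hk)
  have hkr : k ∣ r := ⟨z.1, hfst.symm⟩
  have hmod : k * z.2.val ≡ n [MOD r] := by
    rw [← ZMod.natCast_eq_natCast_iff, Nat.cast_mul, ZMod.natCast_zmod_val, hsnd]
  have hkn : k ∣ n := (hmod.dvd_iff hkr).1 (dvd_mul_right ..)
  obtain rfl : k = 1 := Nat.dvd_one.1 (hgcd ▸ Nat.dvd_gcd hkn hkr)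
  rwa [one_mul] at hfst

/-- The invariants of the gathering stage as long as no leader is elected. -/
structure Balanced {n r : ℕ} (G : Config (Collector r) (Pile r) n r) : Prop where
  total_charge : G.total Collector.charge Pile.charge = (r, (n : ZMod r))
  notes_eq : ∑ p, (G.prisoner p).notes = ∑ i, (G.room i).notes
  fst_ne : ∀ p z, G.prisoner p = .carrying z → z.1 ≠ r

namespace Balanced

variable {n r : ℕ} {G : Config (Collector r) (Pile r) n r} {p : Fin n} {i : Fin r}
  {z w : Charge r}

lemma start : Balanced (⟨fun _ => .fresh, fun _ => ⟨(1, 0), none⟩⟩ :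
    Config (Collector r) (Pile r) n r) where
  total_charge := by ext <;> simp [Config.total, Collector.charge]
  notes_eq := by simp [Collector.notes, Pile.notes]
  fst_ne := by simp

lemma step (hG : Balanced G) (hel : ¬ Elected (G.prisoner p) (G.room i)) :
    Balanced (G.step gather (p, i)) where
  total_charge := by rw [Config.total_step_eq (charge_gather ..), hG.total_charge]
  notes_eq := by
    have hp := sum_update_add Collector.notes G.prisoner p (gather (G.prisoner p) (G.room i)).1
    have hi := sum_update_add Pile.notes G.room i (gather (G.prisoner p) (G.room i)).2
    have hvisit := notes_gather (G.prisoner p) (G.room i)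
    simp only [Config.step]
    refine add_right_cancel (b := (G.prisoner p).notes + (G.room i).notes) ?_
    rw [← add_assoc, hp, add_assoc, hvisit, add_left_comm, hG.notes_eq, ← hi, add_left_comm]
  fst_ne p' z hz := by
    by_cases hp : p' = p
    · subst hp
      rw [Config.step_prisoner_self] at hz
      obtain h | ⟨ha, hs⟩ := eq_of_gather_eq_carrying hz
      · exact hG.fst_ne p' z h
      · simpa [ha, hs, Elected] using hel
    · exact hG.fst_ne p' z (by rwa [Config.step_prisoner_of_ne hp] at hz)

lemma exists_note (hG : Balanced G) (hz : z ∈ (G.prisoner p).notes) :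
    ∃ i, (G.room i).note = some z := by
  have hz : z ∈ ∑ i, (G.room i).notes :=
    hG.notes_eq ▸ Multiset.mem_sum.2 ⟨p, Finset.mem_univ p, hz⟩
  obtain ⟨i, -, hi⟩ := Multiset.mem_sum.1 hz
  refine ⟨i, ?_⟩
  unfold Pile.notes at hi
  cases h : (G.room i).note <;> simp_all

lemma exists_owner (hG : Balanced G) (hz : (G.room i).note = some z) :
    ∃ p, z ∈ (G.prisoner p).notes := by
  have hz : z ∈ ∑ p, (G.prisoner p).notes :=
    hG.notes_eq ▸ Multiset.mem_sum.2 ⟨i, Finset.mem_univ i, by simp [Pile.notes, hz]⟩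
  obtain ⟨p, -, hp⟩ := Multiset.mem_sum.1 hz
  exact ⟨p, hp⟩

section Stable

variable (hG : Balanced G) (hst : G.Stable gather)
include hst

lemma gather_eq_of_stable (p : Fin n) (i : Fin r) :
    gather (G.prisoner p) (G.room i) = (G.prisoner p, G.room i) :=
  Config.step_eq_self_iff.1 (hst (p, i))

lemma charge_eq_zero_of_carrying (hp : G.prisoner p = .carrying z) (i : Fin r) :
    (G.room i).charge = 0 ∧ ∀ w ∈ (G.room i).note, rank w ≤ rank z := by
  have h := gather_eq_of_stable hst p i
  by_contra! hne
  rw [hp, gather, if_pos (by grind)] at h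
  simp at h

include hG

lemma idle_or_carrying [NeZero r] (p : Fin n) :
    G.prisoner p = .idle ∨ ∃ z, G.prisoner p = .carrying z := by
  cases hp : G.prisoner p with
  | fresh => simpa [hp, gather] using gather_eq_of_stable hst p 0
  | idle => exact .inl rfl
  | carrying z => exact .inr ⟨z, rfl⟩
  | cleaning z =>
    obtain ⟨i, hi⟩ := hG.exists_note (p := p) (z := z) (by simp [hp, Collector.notes])
    simpa [hp, hi, gather] using gather_eq_of_stable hst p i

lemma eq_of_carrying [NeZero r] {p' : Fin n} (hp : G.prisoner p = .carrying z)
    (hp' : G.prisoner p' = .carrying w) : w = z := by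
  obtain ⟨i, hi⟩ := hG.exists_note (p := p) (z := z) (by simp [hp, Collector.notes])
  obtain ⟨j, hj⟩ := hG.exists_note (p := p') (z := w) (by simp [hp', Collector.notes])
  exact rank_injective (le_antisymm ((charge_eq_zero_of_carrying hst hp j).2 w hj)
    ((charge_eq_zero_of_carrying hst hp' i).2 z hi))

lemma forall_idle [NeZero r] (hgcd : Nat.gcd n r = 1) (p : Fin n) : G.prisoner p = .idle := by
  refine (idle_or_carrying hG hst p).resolve_right fun ⟨z, hp⟩ => hG.fst_ne p z hp ?_
  have hmem : G.total Collector.charge Pile.charge ∈ AddSubmonoid.multiples z := by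
    refine add_mem (sum_mem fun p' _ => ?_) (sum_mem fun i _ => ?_)
    · obtain hp' | ⟨w, hp'⟩ := idle_or_carrying hG hst p'
      · simp [hp', Collector.charge, zero_mem]
      · rw [hp', eq_of_carrying hG hst hp hp']
        exact AddSubmonoid.mem_multiples z
    · rw [(charge_eq_zero_of_carrying hst hp i).1]
      exact zero_mem _
  obtain ⟨k, hk⟩ := AddSubmonoid.mem_multiples_iff _ _ |>.1 hmem
  exact fst_eq_of_nsmul_eq hgcd (hk.trans hG.total_charge)

end Stable

theorem not_stable [NeZero n] [NeZero r] (hG : Balanced G) (hgcd : Nat.gcd n r = 1) :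
    ¬ G.Stable gather := fun hst => by
  have idle := forall_idle hG hst hgcd
  have empty (i : Fin r) : (G.room i).charge = 0 := by
    have h := gather_eq_of_stable hst 0 i
    rcases hi : G.room i with ⟨c, _ | z⟩
    · by_contra hc
      simp [idle, hi, gather, show c ≠ 0 from hc] at h
    · obtain ⟨p, hp⟩ := hG.exists_owner (i := i) (by rw [hi])
      simp [idle, Collector.notes] at hp
  have htotal := hG.total_charge
  simp only [Config.total, idle, empty, Collector.charge, Finset.sum_const_zero, add_zero] at htotal
  exact NeZero.ne' r (congrArg Prod.fst htotal)

end Balanced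

/-! ### The protocol -/

/-- The memory of a prisoner. -/
inductive Prisoner (r : ℕ) : Type
  /-- takes part in gathering the charge -/
  | collector (a : Collector r)
  /-- the leader, who has erased `j` piles -/
  | touring (j : ℕ)
  /-- the leader, who has invited all but one of the `c` prisoners counted so far -/
  | counting (c : ℕ)
  /-- an invited prisoner, who has flipped `j` marks from `b` to `!b` -/
  | flipping (b : Bool) (j : ℕ)
  /-- an invited prisoner who has visited every room -/
  | done

/-- The state of a room. All states but `pile` carry a mark `b`, so that an invited prisoner can
recognize the rooms it has not flipped yet. -/
inductive Room (r : ℕ) : Type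
  /-- not yet erased by the leader -/
  | pile (s : Pile r)
  /-- carries a mark only -/
  | marked (b : Bool)
  /-- invites a prisoner to tour the rooms -/
  | invite (b : Bool)
  /-- reports to the leader that a tour of all rooms is finished -/
  | finished (b : Bool)

/-- The common rule of the `n` prisoners. Once elected, the leader erases the piles and invites the
other prisoners one by one to visit all rooms. -/
def act {r : ℕ} (n : ℕ) : Prisoner r → Room r → Prisoner r × Room r
  | .collector a, .pile s =>
      if Elected a s then (.touring 0, .pile ⟨0, none⟩)
      else (.collector (gather a s).1, .pile (gather a s).2)
  | .touring j, .pile _ =>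
      if j + 1 < r then (.touring (j + 1), .marked false) else (.counting 1, .finished false)
  | .counting c, .finished b =>
      if c < n then (.counting (c + 1), .invite b) else (.counting c, .finished b)
  | .collector _, .invite b => (.flipping b 0, .marked b)
  | .flipping b j, .marked b' =>
      if b' = b then
        if j + 1 < r then (.flipping b (j + 1), .marked !b) else (.done, .finished !b)
      else (.flipping b j, .marked b')
  | p, s => (p, s)

/-- The protocol for `n` prisoners and `r` rooms. -/
def protocol (n r : ℕ) : Protocol (Prisoner r) (Room r) where
  start := .collector .fresh
  blank := .pile ⟨(1, 0), none⟩
  next := act n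
  declares
    | .counting c, .finished _ => n ≤ c
    | _, _ => false

/-- The contribution of a prisoner to the potential of the protocol. -/
def Prisoner.potential {r : ℕ} (n : ℕ) : Prisoner r → ℕ ×ₗ (ℕ ×ₗ ℕ)
  | collector a => toLex (n + r + 2, a.potential)
  | touring _ => toLex (n, 0)
  | counting c => toLex (n - c, 0)
  | flipping _ j => toLex (r - j + 1, 0)
  | done => toLex (0, 0)

/-- The contribution of a room to the potential of the protocol. -/
def Room.potential {r : ℕ} : Room r → ℕ ×ₗ (ℕ ×ₗ ℕ)
  | pile s => toLex (1, s.potential)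
  | _ => toLex (0, 0)

lemma act_eq_or_potential_lt {r : ℕ} (n : ℕ) (p : Prisoner r) (s : Room r) :
    act n p s = (p, s) ∨
      (act n p s).1.potential n + (act n p s).2.potential < p.potential n + s.potential := by
  cases p <;> cases s <;> simp only [act, true_or] <;> try split_ifs
  all_goals simp only [Prisoner.potential, Room.potential, toLex_add_toLex_lt_iff, true_or]
  all_goals
    first
    | right; left; omega
    | exact (gather_eq_or_potential_lt ..).imp (fun h => by rw [h]) fun h => .inr ⟨trivial, h⟩

section Bounded

variable {r : ℕ}

/-- The first kind of charge owned by a prisoner. -/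
def Prisoner.weight : Prisoner r → ℕ
  | collector a => a.charge.1
  | _ => 0

/-- The first kind of charge in a room. -/
def Room.weight : Room r → ℕ
  | pile s => s.charge.1
  | _ => 0

lemma weight_act_le (n : ℕ) (p : Prisoner r) (s : Room r) :
    (act n p s).1.weight + (act n p s).2.weight ≤ p.weight + s.weight := by
  cases p <;> cases s <;> simp only [act, le_refl] <;> try split_ifs
  all_goals
    first
    | exact (congrArg Prod.fst (charge_gather ..)).le
    | simp [Prisoner.weight, Room.weight]

/-- The charges that a room announces. -/
def Room.notes : Room r → Multiset (Charge r)
  | pile s => s.notes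
  | _ => 0

/-- The room states that occur during a play with `r` rooms. -/
def Room.Bounded (s : Room r) : Prop := s.weight ≤ r ∧ ∀ z ∈ s.notes, z.1 ≤ r

lemma mem_notes_or_eq_of_mem_notes_act {n : ℕ} {p : Prisoner r} {s : Room r} {z : Charge r}
    (hz : z ∈ (act n p s).2.notes) : z ∈ s.notes ∨ z.1 = s.weight := by
  cases p <;> cases s <;> simp only [act] at hz <;> try split_ifs at hz
  all_goals
    first
    | exact .inl hz
    | exact (mem_notes_or_eq_of_mem_notes_gather hz).imp_right (congrArg Prod.fst)
    | simp [Room.notes, Pile.notes] at hz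

lemma finite_bounded [NeZero r] : {s : Room r | s.Bounded}.Finite := by
  let charges : Set (Charge r) := {z | z.1 ≤ r}
  have hcharges : charges.Finite :=
    ((Set.finite_Iic r).prod Set.finite_univ).subset fun z hz => ⟨hz, trivial⟩
  let piles : Set (Pile r) :=
    (fun x => ⟨x.1, x.2⟩) '' (charges ×ˢ insert none (some '' charges))
  have hpiles : piles.Finite := (hcharges.prod ((hcharges.image _).insert _)).image _
  have hbits : (.range .marked ∪ .range .invite ∪ .range .finished : Set (Room r)).Finite :=
    ((Set.finite_range _).union (Set.finite_range _)).union (Set.finite_range _)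
  refine ((hpiles.image .pile).union hbits).subset fun s hs => ?_
  rcases s with ⟨c, _ | w⟩ | b | b | b
  · exact .inl ⟨_, ⟨(c, none), ⟨hs.1, by simp⟩, rfl⟩, rfl⟩
  · have hw : w ∈ charges := hs.2 w (Multiset.mem_singleton_self w)
    exact .inl ⟨_, ⟨(c, some w), ⟨hs.1, .inr ⟨w, hw, rfl⟩⟩, rfl⟩, rfl⟩
  all_goals simp

end Bounded

lemma trace_bounded {n r : ℕ} (sched : Schedule n r) (t : ℕ) (i : Fin r) :
    (((protocol n r).trace sched t).room i).Bounded := by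
  suffices h : ∀ t, ((protocol n r).trace sched t).total Prisoner.weight Room.weight ≤ r ∧
      ∀ i, ∀ z ∈ (((protocol n r).trace sched t).room i).notes, z.1 ≤ r from
    ⟨(Config.room_le_total i).trans (h t).1, (h t).2 i⟩
  intro t
  induction t with
  | zero =>
    simp [Protocol.trace, protocol, Config.total, Prisoner.weight, Room.weight, Collector.charge,
      Room.notes, Pile.notes]
  | succ t ih =>
    obtain ⟨hweight, hnotes⟩ := ih
    rcases hv : sched t with ⟨p, i⟩
    refine ⟨?_, fun j z hz => ?_⟩
    · rw [Protocol.trace, hv]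
      exact (Config.total_step_le (weight_act_le ..)).trans hweight
    · rw [Protocol.trace, hv] at hz
      by_cases hj : j = i
      · subst hj
        rw [Config.step_room_self] at hz
        obtain h | h := mem_notes_or_eq_of_mem_notes_act hz
        · exact hnotes j z h
        · exact h ▸ (Config.room_le_total j).trans hweight
      · exact hnotes j z (by rwa [Config.step_room_of_ne hj] at hz)

/-! ### Stages of a play -/

section Progress

variable {n r : ℕ}

/-- The leader `l` has erased the piles in the rooms of `M`. Here and below `V p i` means that
prisoner `p` has visited room `i`. -/
structure Touring (V : Fin n → Fin r → Prop) (C : Config (Prisoner r) (Room r) n r) (l : Fin n)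
    (M : Finset (Fin r)) : Prop where
  leader : C.prisoner l = .touring M.card
  collector : ∀ p ≠ l, ∃ a, C.prisoner p = .collector a
  card_lt : M.card < r
  toured : ∀ i ∈ M, C.room i = .marked false ∧ V l i
  pile : ∀ i ∉ M, ∃ s, C.room i = .pile s
  weight : C.total Prisoner.weight Room.weight = 0

/-- The leader `l` is counting and shows the count `c`. The prisoners of `D` have visited every
room, and those of `A` are the other ones that no longer take part in the gathering. -/
structure Counting (V : Fin n → Fin r → Prop) (C : Config (Prisoner r) (Room r) n r) (l : Fin n)
    (c : ℕ) (D A : Finset (Fin n)) : Prop where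
  leader_mem : l ∈ D
  leader : C.prisoner l = .counting c
  done : ∀ p ∈ D, p ≠ l → C.prisoner p = .done
  collector : ∀ p ∉ D, p ∉ A → ∃ a, C.prisoner p = .collector a
  visited : ∀ p ∈ D, ∀ i, V p i

/-- The invited prisoner `f` has flipped the marks in the rooms of `M` from `b` to `!b`, while the
prisoners of `D` have visited every room. -/
structure Flipping (V : Fin n → Fin r → Prop) (C : Config (Prisoner r) (Room r) n r) (l f : Fin n)
    (b : Bool) (D : Finset (Fin n)) (M : Finset (Fin r)) : Prop where
  counting : Counting V C l (D.card + 1) D {f}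
  notMem : f ∉ D
  flipper : C.prisoner f = .flipping b M.card
  card_lt : M.card < r
  room : C.room = fun i => .marked (if i ∈ M then !b else b)
  visited : ∀ i ∈ M, V f i

/-- The configurations that occur during a play: the charge is being gathered, the leader is erasing
the piles, a prisoner is invited, an invited prisoner `f` is flipping the marks, or the rooms of all
prisoners counted are finished. -/
inductive Progress (V : Fin n → Fin r → Prop) (C : Config (Prisoner r) (Room r) n r) : Prop
  | gathering {G : Config (Collector r) (Pile r) n r} (hG : Balanced G)
      (hC : C = G.map .collector .pile)
  | touring {l : Fin n} {M : Finset (Fin r)} (h : Touring V C l M)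
  | invited {l : Fin n} {D : Finset (Fin n)} (h : Counting V C l (D.card + 1) D ∅)
      {q : Fin n} (hq : q ∉ D) {b : Bool} {i₀ : Fin r}
      (hroom : C.room = Function.update (fun _ => .marked b) i₀ (.invite b))
  | flipping {l f : Fin n} {b : Bool} {D : Finset (Fin n)} {M : Finset (Fin r)}
      (h : Flipping V C l f b D M)
  | finished {l : Fin n} {D : Finset (Fin n)} (h : Counting V C l D.card D ∅) {b : Bool}
      {i₀ : Fin r} (hroom : C.room = Function.update (fun _ => .marked b) i₀ (.finished b))

variable {V V' : Fin n → Fin r → Prop} {C : Config (Prisoner r) (Room r) n r}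

lemma Touring.mono (hV : V ≤ V') {l : Fin n} {M : Finset (Fin r)} (h : Touring V C l M) :
    Touring V' C l M where
  __ := h
  toured i hi := (h.toured i hi).imp_right (hV l i)

lemma Counting.mono (hV : V ≤ V') {l : Fin n} {c : ℕ} {D A : Finset (Fin n)}
    (h : Counting V C l c D A) : Counting V' C l c D A where
  __ := h
  visited p hp i := hV p i (h.visited p hp i)

lemma Flipping.mono (hV : V ≤ V') {l f : Fin n} {b : Bool} {D : Finset (Fin n)}
    {M : Finset (Fin r)} (h : Flipping V C l f b D M) : Flipping V' C l f b D M where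
  __ := h
  counting := h.counting.mono hV
  visited i hi := hV f i (h.visited i hi)

lemma Progress.mono (hV : V ≤ V') (h : Progress V C) : Progress V' C := by
  cases h with
  | gathering hG hC => exact .gathering hG hC
  | touring h => exact .touring (h.mono hV)
  | invited h hq hroom => exact .invited (h.mono hV) hq hroom
  | flipping h => exact .flipping (h.mono hV)
  | finished h hroom => exact .finished (h.mono hV) hroom

variable {p : Fin n} {i : Fin r}

lemma weight_step_eq_zero (h : C.total Prisoner.weight Room.weight = 0) :
    (C.step (act n) (p, i)).total Prisoner.weight Room.weight = 0 :=
  Nat.le_zero.1 (h ▸ Config.total_step_le (weight_act_le ..))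

lemma Balanced.total_weight {G : Config (Collector r) (Pile r) n r} (hG : Balanced G) :
    (G.map Prisoner.collector Room.pile).total Prisoner.weight Room.weight = r := by
  have h := congrArg Prod.fst hG.total_charge
  rwa [Config.total, Prod.fst_add, Prod.fst_sum, Prod.fst_sum] at h

lemma Balanced.touring_of_elected {G : Config (Collector r) (Pile r) n r} (hG : Balanced G)
    (hel : Elected (G.prisoner p) (G.room i)) :
    Touring V ((G.map .collector .pile).step (act n) (p, i)) p ∅ := by
  have hact : act n (.collector (G.prisoner p)) (.pile (G.room i)) =
    (.touring 0, .pile ⟨0, none⟩) := if_pos hel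
  constructor
  case weight =>
    have htotal := Config.total_step_add (δ := act n) Prisoner.weight Room.weight
      (G.map Prisoner.collector Room.pile) p i
    simp only [hG.total_weight] at htotal
    simp only [Config.map, Function.comp_apply, hact] at htotal ⊢
    simp only [Prisoner.weight, Room.weight, hel.1, hel.2.2, Collector.charge,
      Prod.fst_zero] at htotal
    omega
  case card_lt => exact i.pos
  all_goals simp only [Config.step_eq_of_eq (C := Config.map _ _ G) hact]
  case leader => exact Function.update_self ..
  case collector => exact fun p' hp' => ⟨_, Function.update_of_ne hp' ..⟩
  case toured => exact fun _ hj => absurd hj (Finset.notMem_empty _)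
  case pile =>
    intro j _
    by_cases hj : j = i
    · exact ⟨⟨0, none⟩, by rw [hj, Function.update_self]⟩
    · exact ⟨_, Function.update_of_ne hj ..⟩

lemma Balanced.progress_step {G : Config (Collector r) (Pile r) n r} (hG : Balanced G) :
    Progress V ((G.map .collector .pile).step (act n) (p, i)) := by
  by_cases hel : Elected (G.prisoner p) (G.room i)
  · exact .touring (hG.touring_of_elected hel)
  · exact .gathering (hG.step hel) (Config.step_map (if_neg hel))

variable {l : Fin n}

lemma mem_of_ne_of_card_le {α : Type*} [Fintype α] {M : Finset α} {i j : α} (hi : i ∉ M)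
    (hM : Fintype.card α ≤ M.card + 1) (hj : j ≠ i) : j ∈ M := by
  classical
  have huniv : insert i M = Finset.univ := by
    rw [← Finset.card_eq_iff_eq_univ]
    exact le_antisymm (Finset.card_le_univ _) (by rwa [Finset.card_insert_of_notMem hi])
  exact Finset.mem_of_mem_insert_of_ne (huniv ▸ Finset.mem_univ j) hj

lemma Touring.step_leader {M : Finset (Fin r)} (h : Touring V C l M) (hi : i ∉ M) (hv : V l i)
    (hlast : M.card + 1 < r) : Touring V (C.step (act n) (l, i)) l (insert i M) := by
  obtain ⟨s, hs⟩ := h.pile i hi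
  have hcard := Finset.card_insert_of_notMem hi
  have hact : act n (C.prisoner l) (C.room i) = (.touring (M.card + 1), .marked false) := by
    simp only [act, h.leader, hs, if_pos hlast]
  constructor
  case weight => exact weight_step_eq_zero h.weight
  case card_lt => rwa [hcard]
  all_goals simp only [Config.step_eq_of_eq hact]
  case leader => rw [Function.update_self, hcard]
  case collector =>
    intro p hp
    simpa only [Function.update_of_ne hp] using h.collector p hp
  case toured => grind [h.toured]
  case pile => grind [h.pile]

lemma Touring.progress_step_leader {M : Finset (Fin r)} (h : Touring V C l M) (hi : i ∉ M)
    (hv : V l i) (hlast : r ≤ M.card + 1) : Progress V (C.step (act n) (l, i)) := by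
  obtain ⟨s, hs⟩ := h.pile i hi
  have hact : act n (C.prisoner l) (C.room i) = (.counting 1, .finished false) := by
    simp only [act, h.leader, hs, if_neg hlast.not_gt]
  have hM (j : Fin r) (hj : j ≠ i) : j ∈ M :=
    mem_of_ne_of_card_le hi (by rwa [Fintype.card_fin]) hj
  rw [Config.step_eq_of_eq hact]
  refine .finished (l := l) (D := {l}) (b := false) (i₀ := i) ?_ ?_
  · constructor
    case leader_mem => simp
    case leader => simp
    case done => simp
    case collector =>
      intro p hp _
      rw [Finset.mem_singleton] at hp
      simpa only [Function.update_of_ne hp] using h.collector p hp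
    case visited =>
      intro p hp j
      obtain rfl := Finset.mem_singleton.1 hp
      by_cases hj : j = i
      · exact hj ▸ hv
      · exact (h.toured j (hM j hj)).2
  · funext j
    grind [h.toured]

lemma Touring.step_collector {M : Finset (Fin r)} (h : Touring V C l M) (hp : p ≠ l)
    (hi : i ∉ M) : Touring V (C.step (act n) (p, i)) l M := by
  obtain ⟨a, ha⟩ := h.collector p hp
  obtain ⟨s, hs⟩ := h.pile i hi
  have hcharge : s.charge.1 = 0 := by
    have hle := Config.room_le_total (f := Prisoner.weight) (g := Room.weight) (C := C) i
    simpa [h.weight, hs, Room.weight] using hle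
  have hact : act n (C.prisoner p) (C.room i) =
      (.collector (gather a s).1, .pile (gather a s).2) := by
    rw [ha, hs, act, if_neg]
    rintro ⟨-, -, hel⟩
    exact (Nat.zero_le _).trans_lt h.card_lt |>.ne (hcharge.symm.trans hel)
  constructor
  case weight => exact weight_step_eq_zero h.weight
  case card_lt => exact h.card_lt
  all_goals simp only [Config.step_eq_of_eq hact]
  case leader => rw [Function.update_of_ne hp.symm, h.leader]
  case collector =>
    intro p' hp'
    by_cases hpp : p' = p
    · exact ⟨_, by rw [hpp, Function.update_self]⟩
    · simpa only [Function.update_of_ne hpp] using h.collector p' hp'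
  case toured => grind [h.toured]
  case pile => grind [h.pile]

lemma Touring.progress_step {M : Finset (Fin r)} (h : Touring V C l M) (hv : V p i) :
    Progress V (C.step (act n) (p, i)) := by
  by_cases hi : i ∈ M
  · rw [Config.step_eq_self_iff.2]
    · exact .touring h
    · by_cases hp : p = l
      · simp [hp, h.leader, h.toured i hi, act]
      · obtain ⟨a, ha⟩ := h.collector p hp
        simp [ha, h.toured i hi, act]
  by_cases hp : p = l
  · subst hp
    obtain hlast | hlast := lt_or_ge (M.card + 1) r
    · exact .touring (h.step_leader hi hv hlast)
    · exact h.progress_step_leader hi hv hlast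
  · exact .touring (h.step_collector hp hi)

namespace Counting

variable {c : ℕ} {D A : Finset (Fin n)}

lemma insert_done (h : Counting V C l c D {p}) (hV : ∀ i, V p i) (hp : p ∉ D)
    (R : Fin r → Room r) :
    Counting V ⟨Function.update C.prisoner p .done, R⟩ l c (insert p D) ∅ where
  leader_mem := Finset.mem_insert_of_mem h.leader_mem
  leader := by grind [h.leader, h.leader_mem]
  done := by grind [h.done]
  collector p' hD _ := by
    rw [Finset.mem_insert, not_or] at hD
    simpa only [Function.update_of_ne hD.1] using h.collector p' hD.2 (by simpa using hD.1)
  visited := by grind [h.visited]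

lemma update_leader (h : Counting V C l c D ∅) (c' : ℕ) (R : Fin r → Room r) :
    Counting V ⟨Function.update C.prisoner l (.counting c'), R⟩ l c' D ∅ where
  leader_mem := h.leader_mem
  leader := Function.update_self ..
  done p hp hpl := (Function.update_of_ne hpl ..).trans (h.done p hp hpl)
  collector p hD hA := by
    have hpl : p ≠ l := fun hpl => hD (hpl ▸ h.leader_mem)
    simpa only [Function.update_of_ne hpl] using h.collector p hD hA
  visited := h.visited

variable (h : Counting V C l c D A)
include h

lemma act_marked (hp : p ∉ A) (b : Bool) :
    act n (C.prisoner p) (.marked b) = (C.prisoner p, .marked b) := by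
  by_cases hpl : p = l
  · rw [hpl, h.leader, act] <;> simp
  by_cases hpD : p ∈ D
  · rw [h.done p hpD hpl, act] <;> simp
  · obtain ⟨a, ha⟩ := h.collector p hpD hp
    rw [ha, act] <;> simp

lemma act_invite (hp : p ∈ D) (b : Bool) :
    act n (C.prisoner p) (.invite b) = (C.prisoner p, .invite b) := by
  by_cases hpl : p = l
  · rw [hpl, h.leader, act] <;> simp
  · rw [h.done p hp hpl, act] <;> simp

lemma act_finished (hpl : p ≠ l) (hp : p ∉ A) (b : Bool) :
    act n (C.prisoner p) (.finished b) = (C.prisoner p, .finished b) := by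
  by_cases hpD : p ∈ D
  · rw [h.done p hpD hpl, act] <;> simp
  · obtain ⟨a, ha⟩ := h.collector p hpD hp
    rw [ha, act] <;> simp

lemma update_of_notMem (hA : A ⊆ {p}) (hp : p ∉ D) (x : Prisoner r) (R : Fin r → Room r) :
    Counting V ⟨Function.update C.prisoner p x, R⟩ l c D {p} where
  leader_mem := h.leader_mem
  leader := by grind [h.leader, h.leader_mem]
  done := by grind [h.done]
  collector p' hD hp' := by
    rw [Finset.mem_singleton] at hp'
    simpa only [Function.update_of_ne hp'] using
      h.collector p' hD fun hA' => hp' (Finset.mem_singleton.1 (hA hA'))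
  visited := h.visited

lemma eq_of_counting (hp : p ∉ A) {c' : ℕ} (hc : C.prisoner p = .counting c') : c' = c := by
  by_cases hpl : p = l
  · grind [h.leader]
  · grind [h.done, h.collector]

end Counting

variable {D : Finset (Fin n)} {b : Bool} {i₀ : Fin r}

lemma Counting.progress_step_of_invited (h : Counting V C l (D.card + 1) D ∅) {q : Fin n}
    (hq : q ∉ D)
    (hroom : C.room = Function.update (fun _ => .marked b) i₀ (.invite b)) :
    Progress V (C.step (act n) (p, i)) := by
  have stay (hact : act n (C.prisoner p) (C.room i) = (C.prisoner p, C.room i)) :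
      Progress V (C.step (act n) (p, i)) := by
    rw [Config.step_eq_self_iff.2 hact]
    exact .invited h hq hroom
  by_cases hi : i = i₀
  · have hinvite : C.room i = .invite b := by rw [hroom, hi, Function.update_self]
    by_cases hp : p ∈ D
    · exact stay (hinvite ▸ h.act_invite hp b)
    · obtain ⟨a, ha⟩ := h.collector p hp (Finset.notMem_empty p)
      rw [Config.step_eq_of_eq (x := .flipping b 0) (y := .marked b) (by rw [ha, hinvite, act])]
      refine .flipping (f := p) (M := ∅) (b := b) ⟨h.update_of_notMem (by simp) hp .., hp,
        Function.update_self .., i.pos, ?_, by simp⟩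
      simp [hroom, hi]
  · have hmarked : C.room i = .marked b := by rw [hroom, Function.update_of_ne hi]
    exact stay (hmarked ▸ h.act_marked (Finset.notMem_empty p) b)

lemma Counting.progress_step_of_finished (h : Counting V C l D.card D ∅)
    (hroom : C.room = Function.update (fun _ => .marked b) i₀ (.finished b)) :
    Progress V (C.step (act n) (p, i)) := by
  have stay (hact : act n (C.prisoner p) (C.room i) = (C.prisoner p, C.room i)) :
      Progress V (C.step (act n) (p, i)) := by
    rw [Config.step_eq_self_iff.2 hact]
    exact .finished h hroom
  by_cases hi : i = i₀
  · have hfinished : C.room i = .finished b := by rw [hroom, hi, Function.update_self]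
    by_cases hp : p = l
    · subst hp
      by_cases hlt : D.card < n
      · have hact : act n (C.prisoner p) (C.room i) = (.counting (D.card + 1), .invite b) := by
          rw [h.leader, hfinished, act, if_pos hlt]
        obtain ⟨q, -, hq⟩ : ∃ q ∈ Finset.univ, q ∉ D :=
          Finset.exists_mem_notMem_of_card_lt_card (by rwa [Finset.card_fin])
        rw [Config.step_eq_of_eq hact]
        refine .invited (b := b) (i₀ := i) (h.update_leader ..) hq ?_
        rw [hroom, hi, Function.update_idem]
      · exact stay (by rw [h.leader, hfinished, act, if_neg hlt])
    · exact stay (hfinished ▸ h.act_finished hp (Finset.notMem_empty p) b)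
  · have hmarked : C.room i = .marked b := by rw [hroom, Function.update_of_ne hi]
    exact stay (hmarked ▸ h.act_marked (Finset.notMem_empty p) b)

namespace Flipping

variable {f : Fin n} {M : Finset (Fin r)} (h : Flipping V C l f b D M)
include h

lemma room_of_notMem (hi : i ∉ M) : C.room i = .marked b := by
  simp only [h.room, if_neg hi]

lemma step_flipper (hi : i ∉ M) (hv : V f i) (hlast : M.card + 1 < r) :
    Flipping V (C.step (act n) (f, i)) l f b D (insert i M) := by
  have hact : act n (C.prisoner f) (C.room i) = (.flipping b (M.card + 1), .marked !b) := by
    rw [h.flipper, h.room_of_notMem hi, act, if_pos rfl, if_pos hlast]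
  have hcard := Finset.card_insert_of_notMem hi
  rw [Config.step_eq_of_eq hact]
  constructor
  case counting => exact h.counting.update_of_notMem subset_rfl h.notMem ..
  case notMem => exact h.notMem
  case flipper => simp only [Function.update_self, hcard]
  case card_lt => rwa [hcard]
  case room =>
    funext j
    by_cases hj : j = i <;> simp [h.room, hj]
  case visited =>
    intro j hj
    obtain rfl | hj := Finset.mem_insert.1 hj
    · exact hv
    · exact h.visited j hj

lemma progress_step_flipper (hi : i ∉ M) (hv : V f i) (hlast : r ≤ M.card + 1) :
    Progress V (C.step (act n) (f, i)) := by
  have hact : act n (C.prisoner f) (C.room i) = (.done, .finished !b) := by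
    rw [h.flipper, h.room_of_notMem hi, act, if_pos rfl, if_neg hlast.not_gt]
  have hM (j : Fin r) (hj : j ≠ i) : j ∈ M :=
    mem_of_ne_of_card_le hi (by rwa [Fintype.card_fin]) hj
  rw [Config.step_eq_of_eq hact]
  refine .finished (l := l) (D := insert f D) (b := !b) (i₀ := i) ?_ ?_
  · rw [Finset.card_insert_of_notMem h.notMem]
    refine h.counting.insert_done (fun j => ?_) h.notMem _
    by_cases hj : j = i
    · exact hj ▸ hv
    · exact h.visited j (hM j hj)
  · funext j
    by_cases hj : j = i <;> simp [h.room, hj, hM]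

lemma progress_step (hv : V p i) : Progress V (C.step (act n) (p, i)) := by
  have stay (hact : act n (C.prisoner p) (C.room i) = (C.prisoner p, C.room i)) :
      Progress V (C.step (act n) (p, i)) := by
    rw [Config.step_eq_self_iff.2 hact]
    exact .flipping h
  by_cases hp : p = f
  · subst hp
    by_cases hi : i ∈ M
    · exact stay (by simp [h.flipper, h.room, hi, act])
    obtain hlast | hlast := lt_or_ge (M.card + 1) r
    · exact .flipping (h.step_flipper hi hv hlast)
    · exact h.progress_step_flipper hi hv hlast
  · refine stay ?_
    rw [h.room]
    exact h.counting.act_marked (by simpa using hp) _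

end Flipping

lemma Progress.step (h : Progress V C) (hv : V p i) :
    Progress V (C.step (act n) (p, i)) := by
  cases h with
  | gathering hG hC => exact hC ▸ hG.progress_step
  | touring h => exact h.progress_step hv
  | invited h hq hroom => exact h.progress_step_of_invited hq hroom
  | flipping h => exact h.progress_step hv
  | finished h hroom => exact h.progress_step_of_finished hroom

lemma progress_trace (sched : Schedule n r) (t : ℕ) :
    Progress (fun p i => ∃ s < t, sched s = (p, i)) ((protocol n r).trace sched t) := by
  induction t with
  | zero => exact .gathering Balanced.start rfl
  | succ t ih =>
    rw [Protocol.trace]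
    refine (ih.mono fun p i => ?_).step ⟨t, t.lt_succ_self, rfl⟩
    exact fun ⟨s, hs, hsv⟩ => ⟨s, hs.trans t.lt_succ_self, hsv⟩

lemma declares_iff {x : Prisoner r} {y : Room r} : (protocol n r).declares x y ↔
    ∃ c b, x = .counting c ∧ y = .finished b ∧ n ≤ c := by
  cases x <;> cases y <;> simp [protocol]

lemma Progress.visited_of_declares (h : Progress V C)
    (hd : (protocol n r).declares (C.prisoner p) (C.room i)) (p' : Fin n) (i' : Fin r) :
    V p' i' := by
  obtain ⟨c, b, hp, hi, hc⟩ := declares_iff.1 hd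
  cases h with
  | gathering hG hC => simp [hC, Config.map] at hp
  | @touring l M h =>
    by_cases hiM : i ∈ M
    · simp [h.toured i hiM] at hi
    · obtain ⟨s, hs⟩ := h.pile i hiM
      simp [hs] at hi
  | @invited l D h q hq b i₀ hroom =>
    by_cases hii : i = i₀ <;> simp [hroom, hii] at hi
  | flipping h => simp [h.room] at hi
  | @finished l D h =>
    have hcount : c = D.card := h.eq_of_counting (Finset.notMem_empty p) hp
    have huniv : D = Finset.univ :=
      Finset.eq_univ_of_card D <|
        le_antisymm (Finset.card_le_univ D) (by rwa [Fintype.card_fin, ← hcount])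
    exact h.visited p' (huniv ▸ Finset.mem_univ p') i'

lemma Progress.exists_declares_of_stable [NeZero n] [NeZero r] (hgcd : Nat.gcd n r = 1)
    (h : Progress V C) (hst : C.Stable (act n)) :
    ∃ p i, (protocol n r).declares (C.prisoner p) (C.room i) := by
  have fixed (p i) : act n (C.prisoner p) (C.room i) = (C.prisoner p, C.room i) :=
    Config.step_eq_self_iff.1 (hst (p, i))
  cases h with
  | @gathering G hG hC =>
    refine absurd (fun v => Config.step_eq_self_iff.2 ?_) (hG.not_stable hgcd)
    have hv := fixed v.1 v.2
    simp only [hC, Config.map, Function.comp_apply, act] at hv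
    split_ifs at hv with hel
    · simp at hv
    · simpa [Prod.ext_iff] using hv
  | @touring l M h =>
    obtain ⟨i, -, hi⟩ : ∃ i ∈ Finset.univ, i ∉ M :=
      Finset.exists_mem_notMem_of_card_lt_card (by rw [Finset.card_fin]; exact h.card_lt)
    obtain ⟨s, hs⟩ := h.pile i hi
    have hmove := fixed l i
    rw [hs, h.leader, act] at hmove
    split_ifs at hmove <;> simp at hmove
  | @invited l D h q hq b i₀ hroom =>
    obtain ⟨a, ha⟩ := h.collector q hq (Finset.notMem_empty q)
    simpa [hroom, ha, act] using fixed q i₀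
  | @flipping l f b D M h =>
    obtain ⟨i, -, hi⟩ : ∃ i ∈ Finset.univ, i ∉ M :=
      Finset.exists_mem_notMem_of_card_lt_card (by rw [Finset.card_fin]; exact h.card_lt)
    have hmove := fixed f i
    rw [h.room_of_notMem hi, h.flipper, act, if_pos rfl] at hmove
    split_ifs at hmove <;> simp at hmove
  | @finished l D h b i₀ hroom =>
    have hi₀ : C.room i₀ = .finished b := by rw [hroom, Function.update_self]
    refine ⟨l, i₀, declares_iff.2 ⟨_, b, h.leader, hi₀, ?_⟩⟩
    have hmove := fixed l i₀
    rw [h.leader, hi₀, act] at hmove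
    by_contra hlt
    simp [not_le.1 hlt] at hmove

end Progress

theorem protocol_exists_declaresAt {n r : ℕ} (hgcd : Nat.gcd n r = 1) (sched : Schedule n r)
    (hfair : sched.Fair) : ∃ t, (protocol n r).DeclaresAt sched t := by
  have : NeZero n := ⟨(sched 0).1.pos.ne'⟩
  have : NeZero r := ⟨(sched 0).2.pos.ne'⟩
  obtain ⟨T, hconst, hst⟩ := (protocol n r).exists_stable (Prisoner.potential n) Room.potential
    (act_eq_or_potential_lt n) hfair
  obtain ⟨p, i, hd⟩ := (progress_trace sched T).exists_declares_of_stable hgcd hst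
  obtain ⟨t, ht, hTt⟩ := (hfair p i).exists_gt T
  refine ⟨t, ?_⟩
  rwa [Protocol.DeclaresAt, hconst t hTt.le, show sched t = (p, i) from ht]

theorem allVisitedBy_of_protocol_declaresAt {n r : ℕ} (sched : Schedule n r) (t : ℕ)
    (h : (protocol n r).DeclaresAt sched t) : allVisitedBy sched t := fun p i =>
  let ⟨s, hs, hsv⟩ := (progress_trace sched t).visited_of_declares h p i
  ⟨s, hs.le, hsv⟩

end PrisonersGame

open PrisonersGame in
theorem symmetric_strategy_few_rooms_general (r : ℕ) (hr : 1 ≤ r) :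
    ∃ q : ℕ, ∀ n : ℕ, Nat.gcd n r = 1 → HasSymmetricWinningStrategy n r q := by
  have : NeZero r := ⟨Nat.ne_of_gt hr⟩
  obtain ⟨q, code, hblank, hlt, hcode⟩ := exists_code finite_bounded (.pile ⟨(1, 0), none⟩ : Room r)
  exact ⟨q, fun n hgcd => Protocol.hasSymmetricWinningStrategy (M := protocol n r) hblank hlt hcode
    trace_bounded (protocol_exists_declaresAt hgcd) allVisitedBy_of_protocol_declaresAt⟩

open PrisonersGame in
/-- For every `r ≥ 1` there exists `q = q(r)` such that for every `n > r` with
`gcd(n, r) = 1`, the `n` prisoners have a symmetric winning strategy for `r`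
rooms with `q` states. -/
theorem symmetric_strategy_few_rooms (r : ℕ) (hr : 1 ≤ r) :
    ∃ q : ℕ, ∀ n : ℕ, r < n → Nat.gcd n r = 1 →
      HasSymmetricWinningStrategy n r q := by
  obtain ⟨q, hq⟩ := symmetric_strategy_few_rooms_general r hr
  exact ⟨q, fun n _ => hq n⟩
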